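/- Let F : X → L(H) be a bounded L(H)-valued norm on a complex normed space X. Then F preserves Cauchy sequences if and only if F is continuous on X (with respect to the norm topology of X and the operator-norm topology of L(H)). -/

import Mathlib

/-- An `L(H)`-valued norm on a complex normed space `X`: `F x` is a positive operator,
`F` satisfies the triangle inequality in the Loewner order (`S ≤ T` iff `T - S` is positive),
`F` is absolutely homogeneous, and `F x = 0` iff `x = 0`. -/
structure IsOpValuedNorm {X H : Type*} [NormedAddCommGroup X] [NormedSpace ℂ X]
    [NormedAddCommGroup H] [InnerProductSpace ℂ H] [CompleteSpace H]
    (F : X → H →L[ℂ] H) : Prop where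
  isPositive : ∀ x, (F x).IsPositive
  triangle : ∀ x y, (F x + F y - F (x + y)).IsPositive
  smul_eq : ∀ (c : ℂ) (x : X), F (c • x) = ‖c‖ • F x
  eq_zero_iff : ∀ x, F x = 0 ↔ x = 0

/-- If `T - S` and `T + S` are positive, then `‖S‖ ≤ ‖T‖` for symmetric `S`. -/
theorem norm_le_norm_of_isPositive_sub_of_isPositive_add {H : Type*} [NormedAddCommGroup H]
    [InnerProductSpace ℂ H] {S T : H →L[ℂ] H} (hS : S.IsSymmetric)
    (hsub : (T - S).IsPositive) (hadd : (T + S).IsPositive) : ‖S‖ ≤ ‖T‖ := by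
  rw [S.norm_eq_iSup_rayleighQuotient hS]
  refine ciSup_le fun x => le_trans ?_ ((le_abs_self _).trans (T.rayleighQuotient_le_norm x))
  have h₁ := hsub.re_inner_nonneg_left x
  have h₂ := hadd.re_inner_nonneg_left x
  simp only [sub_apply, add_apply, inner_sub_left, inner_add_left, map_sub, map_add] at h₁ h₂
  simp only [ContinuousLinearMap.rayleighQuotient, ContinuousLinearMap.reApplyInnerSelf_apply,
    abs_div, abs_sq]
  gcongr
  exact abs_le.mpr ⟨by linarith, by linarith⟩

namespace IsOpValuedNorm

variable {X H : Type*} [NormedAddCommGroup X] [NormedSpace ℂ X]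
  [NormedAddCommGroup H] [InnerProductSpace ℂ H] [CompleteSpace H] {F : X → H →L[ℂ] H}

theorem map_neg (hF : IsOpValuedNorm F) (x : X) : F (-x) = F x := by
  simpa using hF.smul_eq (-1) x

theorem norm_sub_le (hF : IsOpValuedNorm F) (x y : X) : ‖F x - F y‖ ≤ ‖F (x - y)‖ := by
  refine norm_le_norm_of_isPositive_sub_of_isPositive_add
    ((hF.isPositive x).isSymmetric.sub (hF.isPositive y).isSymmetric) ?_ ?_
  · convert hF.triangle (x - y) y using 1
    rw [sub_add_cancel]
    abel
  · convert hF.triangle (y - x) x using 1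
    rw [sub_add_cancel, ← neg_sub x y, hF.map_neg]
    abel

theorem norm_le_mul_norm (hF : IsOpValuedNorm F) {M : ℝ}
    (hM : ∀ x : X, ‖x‖ = 1 → ‖F x‖ ≤ M) (x : X) : ‖F x‖ ≤ M * ‖x‖ := by
  rcases eq_or_ne x 0 with rfl | hx
  · simp [(hF.eq_zero_iff 0).mpr rfl]
  · have h := hM (((‖x‖⁻¹ : ℝ) : ℂ) • x) (by simp [norm_smul, hx])
    rw [hF.smul_eq, norm_smul] at h
    simp only [Complex.norm_real, norm_inv, norm_norm] at h
    rwa [inv_mul_le_iff₀ (norm_pos_iff.mpr hx), mul_comm] at h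

theorem lipschitzWith (hF : IsOpValuedNorm F) {M : ℝ}
    (hM : ∀ x : X, ‖x‖ = 1 → ‖F x‖ ≤ M) : LipschitzWith M.toNNReal F :=
  LipschitzWith.of_dist_le' fun x y => by
    simpa only [dist_eq_norm] using (hF.norm_sub_le x y).trans (hF.norm_le_mul_norm hM (x - y))

end IsOpValuedNorm

/-- A bounded `L(H)`-valued norm `F` on a complex normed space `X` preserves Cauchy
sequences if and only if it is continuous on `X`. -/
theorem opValuedNorm_preserves_cauchy_iff_continuous {X H : Type*} [NormedAddCommGroup X] [NormedSpace ℂ X]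
    [NormedAddCommGroup H] [InnerProductSpace ℂ H] [CompleteSpace H] [Nontrivial H]
    (F : X → H →L[ℂ] H) (hF : IsOpValuedNorm F)
    (hbdd : ∃ M : ℝ, ∀ x : X, ‖x‖ = 1 → ‖F x‖ ≤ M) :
    (∀ u : ℕ → X, CauchySeq u → CauchySeq (fun n => F (u n))) ↔ Continuous F := by
  obtain ⟨M, hM⟩ := hbdd
  have hL := hF.lipschitzWith hM
  exact ⟨fun _ => hL.continuous, fun _ u hu => hu.map hL.uniformContinuous⟩
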